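/- The bidirectional type system only checks terms in normal form: if a is annotation-free (contains no subterm of the form (b : B)) and either Γ ⊢ a ⇒ A or Γ ⊢ a ⇐ A, then a contains no β-redex, i.e., no subterm of the form (λx.b) c. -/

import Mathlib

/-!
A head `λx.b` of an application would have to infer a type. No inference rule applies to a bare
abstraction: only an annotation lets one infer, and those are excluded. Structural induction on
the term, for both judgments at once, therefore shows that no redex occurs at any depth.
-/

/-- Terms of the core pi-forall language, with de Bruijn indices for variables.
    `lam a` binds one variable in `a`, and `pi A B` binds one variable in `B`.
    (De Bruijn representation identifies terms up to α-equivalence.) -/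
inductive Tm : Type
  | var : Nat → Tm
  | lam : Tm → Tm
  | app : Tm → Tm → Tm
  | pi  : Tm → Tm → Tm
  | type : Tm
  | annot : Tm → Tm → Tm
  deriving DecidableEq

namespace Tm

/-- `lift d c t` shifts by `d` every variable of `t` whose index is at least `c`. -/
def lift (d c : Nat) : Tm → Tm
  | var k => if k < c then var k else var (k + d)
  | lam a => lam (lift d (c + 1) a)
  | app a b => app (lift d c a) (lift d c b)
  | pi A B => pi (lift d c A) (lift d (c + 1) B)
  | type => type
  | annot a A => annot (lift d c a) (lift d c A)

/-- `subst a x b` is the capture-avoiding substitution `b[a/x]` of `a`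
    for variable `x` in `b` (indices above `x` are decremented). -/
def subst (a : Tm) (x : Nat) : Tm → Tm
  | var k => if k = x then lift x 0 a else if x < k then var (k - 1) else var k
  | lam b => lam (subst a (x + 1) b)
  | app b c => app (subst a x b) (subst a x c)
  | pi A B => pi (subst a x A) (subst a (x + 1) B)
  | type => type
  | annot b A => annot (subst a x b) (subst a x A)

end Tm

/-- A typing context is a list of types; the head is the type of variable 0. -/
abbrev Ctx := List Tm

/-- `lookupTy Γ x = some A` means `x : A ∈ Γ` (with the type suitably shifted
    so that it is well-scoped in the whole context `Γ`). -/
def lookupTy : Ctx → Nat → Option Tm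
  | [], _ => none
  | A :: _, 0 => some (Tm.lift 1 0 A)
  | _ :: Γ, k + 1 => (lookupTy Γ k).map (Tm.lift 1 0)

mutual
/-- The bidirectional inference judgment `Γ ⊢ a ⇒ A`. -/
inductive Infers : Ctx → Tm → Tm → Prop
  | var {Γ x A} : lookupTy Γ x = some A → Infers Γ (.var x) A
  | type {Γ} : Infers Γ .type .type
  | pi {Γ A B} : Checks Γ A .type → Checks (A :: Γ) B .type →
      Infers Γ (.pi A B) .type
  | app {Γ a b A B} : Infers Γ a (.pi A B) → Checks Γ b A →
      Infers Γ (.app a b) (Tm.subst b 0 B)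
  | annot {Γ a A} : Checks Γ A .type → Checks Γ a A →
      Infers Γ (.annot a A) A

/-- The bidirectional checking judgment `Γ ⊢ a ⇐ A`. -/
inductive Checks : Ctx → Tm → Tm → Prop
  | lam {Γ A a B} : Checks (A :: Γ) a B → Checks Γ (.lam a) (.pi A B)
  | infer {Γ a A} : (∀ b, a ≠ .lam b) → Infers Γ a A → Checks Γ a A
end

/-- A term is annotation-free when it contains no subterm of the form `(b : B)`. -/
def AnnotFree : Tm → Prop
  | .var _ => True
  | .lam a => AnnotFree a
  | .app a b => AnnotFree a ∧ AnnotFree b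
  | .pi A B => AnnotFree A ∧ AnnotFree B
  | .type => True
  | .annot _ _ => False

/-- A term is redex-free when it contains no subterm of the form `(λx.b) c`. -/
def RedexFree : Tm → Prop
  | .var _ => True
  | .lam a => RedexFree a
  | .app a b => (∀ a', a ≠ .lam a') ∧ RedexFree a ∧ RedexFree b
  | .pi A B => RedexFree A ∧ RedexFree B
  | .type => True
  | .annot a A => RedexFree a ∧ RedexFree A

/-- The bidirectional type system only checks terms in normal form:
    if `a` is annotation-free and `Γ ⊢ a ⇒ A` or `Γ ⊢ a ⇐ A`,
    then `a` contains no β-redex. -/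
theorem bidir_normal {Γ : Ctx} {a A : Tm}
    (hfree : AnnotFree a) (h : Infers Γ a A ∨ Checks Γ a A) :
    RedexFree a := by
  induction a generalizing Γ A with
  | var _ => trivial
  | type => trivial
  | annot _ _ => exact hfree.elim
  | lam b ih =>
    rcases h with h | h
    · cases h
    · cases h with
      | lam hb => exact ih hfree (.inr hb)
      | infer hne _ => exact absurd rfl (hne b)
  | pi B C ihB ihC =>
    have h' : Infers Γ (.pi B C) A := by
      rcases h with h | h
      · exact h
      · cases h; assumption
    cases h' with
    | pi hB hC => exact ⟨ihB hfree.1 (.inr hB), ihC hfree.2 (.inr hC)⟩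
  | app b c ihb ihc =>
    have h' : Infers Γ (.app b c) A := by
      rcases h with h | h
      · exact h
      · cases h; assumption
    cases h' with
    | app hb hc =>
      refine ⟨?_, ihb hfree.1 (.inl hb), ihc hfree.2 (.inr hc)⟩
      -- The head of an application must infer, and no inference rule concludes with a `lam`.
      rintro _ rfl
      cases hb
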